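/- Let q be a nonzero complex number that is not a root of unity and let z be a fixed square root of q. Let m, n be nonnegative integers, let α : ℤ → ℂ be a sequence, and let F_{L,M} (L, M ≥ 0) satisfy F_{L,M} = Σ_{j∈ℤ} α_j · T(L, M; mj, nj; q) for all nonnegative integers L, M (all such sums are finite since T vanishes when |j| is large). Then for all nonnegative integers L, M: Σ_{i=0}^{M} z^{i²} [L+M−i choose L]_q · F_{L−i, i} = Σ_{j∈ℤ} z^{(nj)²} α_j · T(L, M; (m+n)j, nj; q). -/

import Mathlib

open Finset

noncomputable section

/-- The finite q-Pochhammer symbol `(a;q)_n`. -/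
def qPoch (a q : ℂ) (n : ℕ) : ℂ := ∏ k ∈ Finset.range n, (1 - a * q ^ k)

/-- The infinite q-Pochhammer symbol `(a;q)_∞`. -/
def qPochInf (a q : ℂ) : ℂ := ∏' k : ℕ, (1 - a * q ^ k)

/-- The Gaussian binomial coefficient `[N choose k]_q`, zero unless `0 ≤ k ≤ N`. -/
def qBinom (q : ℂ) (N k : ℤ) : ℂ :=
  if 0 ≤ k ∧ k ≤ N then qPoch q q N.toNat / (qPoch q q k.toNat * qPoch q q (N - k).toNat)
  else 0

/-- `1/(a;q)_k`, with the convention that it is `0` for `k < 0`. -/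
def invPoch (a q : ℂ) (k : ℤ) : ℂ := if 0 ≤ k then (qPoch a q k.toNat)⁻¹ else 0

/-- Warnaar's refined q-trinomial coefficient `T(L, M; a, b; q)`, where `z` is a fixed
square root of `q`, so that `q^(n²/2) = z^(n²)`. -/
def Twar (z q : ℂ) (L M a b : ℤ) : ℂ :=
  ∑' n : ℕ, if (L - a - (n : ℤ)) % 2 = 0 then
    z ^ (n ^ 2) * qBinom q M (n : ℤ) * qBinom q (M + b + (L - a - (n : ℤ)) / 2) (M + b) *
      qBinom q (M - b + (L + a - (n : ℤ)) / 2) (M - b)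
  else 0

/-- Warnaar's refined q-trinomial coefficient `S(L, M; a, b; q)`. -/
def Swar (q : ℂ) (L M a b : ℤ) : ℂ :=
  ∑' n : ℕ, q ^ ((n : ℤ) * ((n : ℤ) + a)) * qBinom q (M + L - a - 2 * (n : ℤ)) M *
    qBinom q (M - a + b) (n : ℤ) * qBinom q (M + a - b) ((n : ℤ) + a)

/-- The Andrews–Baxter q-trinomial coefficient `(L, b; a; q)₂`. -/
def roundTri (q : ℂ) (L : ℕ) (b a : ℤ) : ℂ :=
  ∑' n : ℕ, q ^ ((n : ℤ) * ((n : ℤ) + b)) * qPoch q q L * invPoch q q (n : ℤ) *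
    invPoch q q ((n : ℤ) + a) * invPoch q q ((L : ℤ) - 2 * (n : ℤ) - a)

/-- The Andrews–Baxter q-trinomial `T₀(L; a; q) = q^((L²-a²)/2) (L,a;a;1/q)₂`, where `z`
is a fixed square root of `q`, so that `q^((L²-a²)/2) = z^(L²-a²)`. -/
def T0 (z q : ℂ) (L : ℕ) (a : ℤ) : ℂ := z ^ ((L : ℤ) ^ 2 - a ^ 2) * roundTri q⁻¹ L a a

/-- The partial sum `N_k = n_k + n_(k+1) + ... + n_ν` (0-indexed). -/
def Nsum {ν : ℕ} (n : Fin ν → ℕ) (k : Fin ν) : ℕ := ∑ l : Fin ν, if k ≤ l then n l else 0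

end

/-!
For a single `j` put `a = m * j`, `b = n * j`, and take the generating function of the claim in `M`.
Since `∑ k, [L + k choose L] x ^ k = 1 / (x; q)_(L+1)`, the claim becomes `A_b = (x; q)_(L+1) B_b`,
where `A_b` is the generating function of `z ^ i² T(L - i, i; a, b)` and `B_b` that of
`z ^ b² T(L, M; a + b, b)`.

The series `A_b` and `(1 - x) B_b` satisfy the same first-order `q`-difference equations, which link
`b` to `b - 1 / 2` and to a smaller `L`, once `A` and `B` are also defined at half-integers. They
stem from the recurrences in `M`, `P`, `Q` for the coefficients of
`(-z u v; q)_M / ((u²; q)_(P+1) (v²; q)_(Q+1))`, among which the `T(L, M; a, b)` occur. As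
`(x; q)_(N+1) = (1 - x) (q x; q)_N`, induction on `N = L + 1` gives the claim.
-/

section Gaussian

variable {q : ℂ}

lemma qPoch_self_succ (q : ℂ) (n : ℕ) : qPoch q q (n + 1) = qPoch q q n * (1 - q ^ (n + 1)) := by
  rw [qPoch, prod_range_succ, ← pow_succ', qPoch]

lemma qPoch_self_ne_zero (hroot : ∀ k : ℕ, 0 < k → q ^ k ≠ 1) (n : ℕ) : qPoch q q n ≠ 0 := by
  refine prod_ne_zero_iff.mpr fun k _ => sub_ne_zero.mpr ?_
  rw [← pow_succ']
  exact (hroot (k + 1) k.succ_pos).symm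

lemma qBinom_eq_zero {N k : ℤ} (h : k < 0 ∨ N < k) : qBinom q N k = 0 :=
  if_neg (by omega)

lemma qBinom_add_natCast (q : ℂ) (k d : ℕ) :
    qBinom q (k + d) k = qPoch q q (k + d) / (qPoch q q k * qPoch q q d) := by
  rw [qBinom, if_pos (by omega)]
  congr 3
  omega

lemma qBinom_symm (q : ℂ) (N k : ℤ) : qBinom q N (N - k) = qBinom q N k := by
  unfold qBinom
  rw [sub_sub_cancel, mul_comm]
  congr 1
  exact propext (by omega)

lemma qBinom_self (hroot : ∀ k : ℕ, 0 < k → q ^ k ≠ 1) {N : ℤ} (hN : 0 ≤ N) :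
    qBinom q N N = 1 := by
  lift N to ℕ using hN
  have h := qBinom_add_natCast q N 0
  have h0 : qPoch q q 0 = 1 := prod_range_zero _
  rwa [Nat.cast_zero, add_zero, add_zero, h0, mul_one, div_self (qPoch_self_ne_zero hroot N)] at h

lemma qBinom_zero_right (hroot : ∀ k : ℕ, 0 < k → q ^ k ≠ 1) {N : ℤ} (hN : 0 ≤ N) :
    qBinom q N 0 = 1 := by
  rw [← qBinom_symm, sub_zero, qBinom_self hroot hN]

lemma qBinom_pascal (hroot : ∀ k : ℕ, 0 < k → q ^ k ≠ 1) {N k : ℤ} (h : N ≠ 0 ∨ k ≠ 0) :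
    qBinom q N k = q ^ k * qBinom q (N - 1) k + qBinom q (N - 1) (k - 1) := by
  rcases lt_or_ge k 0 with hk | hk
  · simp only [qBinom_eq_zero (.inl hk), qBinom_eq_zero (.inl (show k - 1 < 0 by omega)),
      mul_zero, add_zero]
  rcases lt_trichotomy N k with hN | rfl | hN
  · simp only [qBinom_eq_zero (.inr hN), qBinom_eq_zero (.inr (show N - 1 < k by omega)),
      qBinom_eq_zero (.inr (show N - 1 < k - 1 by omega)), mul_zero, add_zero]
  · rw [qBinom_self hroot hk, qBinom_self hroot (by omega), qBinom_eq_zero (.inr (by omega)),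
      mul_zero, zero_add]
  rcases hk.eq_or_lt with rfl | hk
  · rw [qBinom_zero_right hroot (by omega), qBinom_zero_right hroot (by omega),
      qBinom_eq_zero (.inl (by omega)), zpow_zero, one_mul, add_zero]
  obtain ⟨a, rfl⟩ : ∃ a : ℕ, k = (a + 1 : ℕ) := ⟨(k - 1).toNat, by omega⟩
  obtain ⟨d, rfl⟩ : ∃ d : ℕ, N = (a + 1 : ℕ) + (d + 1 : ℕ) := ⟨(N - a - 2).toNat, by omega⟩
  rw [show ((a + 1 : ℕ) + (d + 1 : ℕ) - 1 : ℤ) = (a + 1 : ℕ) + d by push_cast; ring,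
    qBinom_add_natCast, qBinom_add_natCast,
    show ((a + 1 : ℕ) + d : ℤ) = a + (d + 1 : ℕ) by push_cast; ring,
    show ((a + 1 : ℕ) - 1 : ℤ) = a by push_cast; ring, qBinom_add_natCast, zpow_natCast,
    show a + 1 + (d + 1) = a + d + 1 + 1 by ring, show a + 1 + d = a + d + 1 by ring,
    ← add_assoc a d 1, qPoch_self_succ q (a + d + 1), qPoch_self_succ q a, qPoch_self_succ q d]
  have ha := qPoch_self_ne_zero hroot a
  have hd := qPoch_self_ne_zero hroot d
  have ha' : 1 - q ^ (a + 1) ≠ 0 := sub_ne_zero.mpr (hroot _ a.succ_pos).symm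
  have hd' : 1 - q ^ (d + 1) ≠ 0 := sub_ne_zero.mpr (hroot _ d.succ_pos).symm
  field_simp
  ring

lemma qBinom_pascal' (hroot : ∀ k : ℕ, 0 < k → q ^ k ≠ 1) {N k : ℤ} (h : N ≠ 0 ∨ k ≠ 0) :
    qBinom q N k = qBinom q (N - 1) k + q ^ (N - k) * qBinom q (N - 1) (k - 1) := by
  rw [← qBinom_symm q N, qBinom_pascal hroot (by omega), ← qBinom_symm q (N - 1) k,
    ← qBinom_symm q (N - 1) (k - 1), sub_right_comm N k 1, sub_sub_sub_cancel_right, add_comm]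

end Gaussian

section RefinedTrinomial

variable {q z : ℂ}

/-- The coefficient of `u ^ t` in `1 / (u²; q)_(P+1)`, read as `0` when `P < 0`. Squaring the
variable absorbs the parity condition in the definition of `Twar`. -/
noncomputable def invPochSqCoeff (q : ℂ) (P t : ℤ) : ℂ :=
  if Even t then qBinom q (P + t / 2) P else 0

/-- The coefficient of `u ^ s * v ^ t` in `(-z u v; q)_M / ((u²; q)_(P+1) (v²; q)_(Q+1))`. It
equals `T(L, M; a, b; q)` at `P = M + b`, `Q = M - b`, `s = L - a`, `t = L + a`, and satisfies a
first-order recurrence in each of `M`, `P` and `Q`, which `T` itself does not. -/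
noncomputable def trinomCoeff (z q : ℂ) (M : ℕ) (P Q s t : ℤ) : ℂ :=
  ∑ n ∈ range (M + 1),
    z ^ n ^ 2 * qBinom q M n * invPochSqCoeff q P (s - n) * invPochSqCoeff q Q (t - n)

lemma invPochSqCoeff_eq_zero {P t : ℤ} (h : P < 0 ∨ t < 0) : invPochSqCoeff q P t = 0 := by
  rw [invPochSqCoeff, qBinom_eq_zero (by omega), ite_self]

lemma invPochSqCoeff_sub_one (hroot : ∀ k : ℕ, 0 < k → q ^ k ≠ 1) {P t : ℤ}
    (h : P ≠ 0 ∨ t ≠ 0) :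
    invPochSqCoeff q (P - 1) t = invPochSqCoeff q P t - q ^ P * invPochSqCoeff q P (t - 2) := by
  by_cases ht : Even t
  · have ht' : Even (t - 2) := ht.sub even_two
    obtain ⟨r, rfl⟩ := ht
    rw [invPochSqCoeff, invPochSqCoeff, invPochSqCoeff, if_pos ⟨r, rfl⟩, if_pos ⟨r, rfl⟩,
      if_pos ht', qBinom_pascal hroot (N := P + (r + r) / 2) (by omega),
      show P + (r + r - 2) / 2 = P + (r + r) / 2 - 1 by omega, add_sub_cancel_left,
      sub_add_eq_add_sub]
  · have ht' : ¬Even (t - 2) := by rwa [Int.even_sub, iff_true_right even_two]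
    simp only [invPochSqCoeff, if_neg ht, if_neg ht', mul_zero, sub_zero]

lemma trinomCoeff_swap (z q : ℂ) (M : ℕ) (P Q s t : ℤ) :
    trinomCoeff z q M P Q s t = trinomCoeff z q M Q P t s :=
  sum_congr rfl fun _ _ => mul_right_comm _ _ _

lemma trinomCoeff_eq_zero {M : ℕ} {P Q s t : ℤ} (h : P < 0 ∨ Q < 0 ∨ s < 0 ∨ t < 0) :
    trinomCoeff z q M P Q s t = 0 := by
  refine sum_eq_zero fun n _ => ?_
  obtain h | h : (P < 0 ∨ s - n < 0) ∨ Q < 0 ∨ t - n < 0 := by omega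
  · rw [invPochSqCoeff_eq_zero h, mul_zero, zero_mul]
  · rw [invPochSqCoeff_eq_zero h, mul_zero]

lemma trinomCoeff_sub_one_left (hroot : ∀ k : ℕ, 0 < k → q ^ k ≠ 1) (z : ℂ) {M : ℕ} {P s : ℤ}
    (Q t : ℤ) (h : P ≠ 0 ∨ M < s) :
    trinomCoeff z q M (P - 1) Q s t =
      trinomCoeff z q M P Q s t - q ^ P * trinomCoeff z q M P Q (s - 2) t := by
  simp only [trinomCoeff, mul_sum, ← sum_sub_distrib]
  refine sum_congr rfl fun n hn => ?_
  have hns : P ≠ 0 ∨ s - n ≠ 0 := by have := mem_range.mp hn; omega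
  rw [invPochSqCoeff_sub_one hroot hns, sub_right_comm s 2]
  ring

lemma trinomCoeff_sub_one_right (hroot : ∀ k : ℕ, 0 < k → q ^ k ≠ 1) (z : ℂ) {M : ℕ} {Q t : ℤ}
    (P s : ℤ) (h : Q ≠ 0 ∨ M < t) :
    trinomCoeff z q M P (Q - 1) s t =
      trinomCoeff z q M P Q s t - q ^ Q * trinomCoeff z q M P Q s (t - 2) := by
  simp only [trinomCoeff_swap z q M P, trinomCoeff_sub_one_left hroot z P s h]

lemma trinomCoeff_succ (hq : q ≠ 0) (hroot : ∀ k : ℕ, 0 < k → q ^ k ≠ 1) (hz : z ^ 2 = q)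
    (M : ℕ) (P Q s t : ℤ) :
    trinomCoeff z q (M + 1) P Q s t =
      trinomCoeff z q M P Q s t + z * q ^ M * trinomCoeff z q M P Q (s - 1) (t - 1) := by
  have hterm (n : ℕ) : z ^ (n + 1) ^ 2 * qBinom q (M + 1 : ℕ) (n + 1 : ℕ) =
      z ^ (n + 1) ^ 2 * qBinom q M (n + 1 : ℕ) + z * q ^ M * (z ^ n ^ 2 * qBinom q M n) := by
    have hpow : z ^ (n + 1) ^ 2 * q ^ ((M : ℤ) - n) = z * q ^ M * z ^ n ^ 2 := by
      rw [zpow_sub₀ hq, zpow_natCast, zpow_natCast, mul_div_assoc', div_eq_iff (pow_ne_zero n hq),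
        ← hz]
      ring
    rw [qBinom_pascal' hroot (by omega)]
    push_cast
    rw [add_sub_cancel_right, add_sub_cancel_right, add_sub_add_right_eq_sub]
    linear_combination qBinom q M n * hpow
  have hlast : qBinom q M (M + 1 : ℕ) = 0 := qBinom_eq_zero (by omega)
  have hextend : trinomCoeff z q M P Q s t = ∑ n ∈ range (M + 2),
      z ^ n ^ 2 * qBinom q M n * invPochSqCoeff q P (s - n) * invPochSqCoeff q Q (t - n) := by
    rw [sum_range_succ, hlast, mul_zero, zero_mul, zero_mul, add_zero, trinomCoeff]
  rw [hextend, trinomCoeff, trinomCoeff, sum_range_succ', sum_range_succ' _ (M + 1), mul_sum,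
    add_right_comm, ← sum_add_distrib, Nat.cast_zero, qBinom_zero_right hroot (by omega),
    qBinom_zero_right hroot (by omega)]
  congr 1
  refine sum_congr rfl fun n _ => ?_
  rw [hterm, sub_sub s, sub_sub t, add_comm (1 : ℤ)]
  push_cast
  ring

lemma trinomCoeff_zero_zero (hroot : ∀ k : ℕ, 0 < k → q ^ k ≠ 1) (M : ℕ) {P Q : ℤ} (hP : 0 ≤ P)
    (hQ : 0 ≤ Q) : trinomCoeff z q M P Q 0 0 = 1 := by
  rw [trinomCoeff, sum_eq_single_of_mem 0 (mem_range.mpr M.succ_pos)]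
  · simp [invPochSqCoeff, qBinom_zero_right hroot, qBinom_self hroot hP, qBinom_self hroot hQ]
  · intro n _ hn
    rw [invPochSqCoeff_eq_zero (t := 0 - n) (by omega), mul_zero, zero_mul]

lemma Twar_eq_trinomCoeff (z q : ℂ) (L : ℤ) (M : ℕ) (a b : ℤ) :
    Twar z q L M a b = trinomCoeff z q M (M + b) (M - b) (L - a) (L + a) := by
  rw [Twar, tsum_eq_sum (s := range (M + 1)), trinomCoeff]
  · refine sum_congr rfl fun n _ => ?_
    unfold invPochSqCoeff
    by_cases h : Even (L - a - n)
    · have h' : Even (L + a - n) := by rw [Int.even_iff] at h ⊢; omega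
      rw [if_pos h, if_pos h', if_pos (Int.even_iff.mp h)]
    · rw [if_neg h, if_neg (mt Int.even_iff.mpr h), mul_zero, zero_mul]
  · intro n hn
    rw [mem_range, not_lt] at hn
    rw [qBinom_eq_zero (N := M) (by omega), mul_zero, zero_mul, zero_mul, ite_self]

lemma Twar_neg (z q : ℂ) (L : ℤ) (M : ℕ) (a b : ℤ) :
    Twar z q L M (-a) (-b) = Twar z q L M a b := by
  rw [Twar_eq_trinomCoeff, Twar_eq_trinomCoeff, trinomCoeff_swap, sub_neg_eq_add, sub_neg_eq_add,
    ← sub_eq_add_neg, ← sub_eq_add_neg]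

lemma Twar_eq_zero {L : ℤ} {M : ℕ} {a b : ℤ} (h : L < |a| ∨ M < |b|) : Twar z q L M a b = 0 := by
  rw [Twar_eq_trinomCoeff, trinomCoeff_eq_zero]
  rcases h with h | h <;> rw [lt_abs] at h <;> omega

end RefinedTrinomial

section GeneratingFunction

open PowerSeries

variable {q z : ℂ}

/-- `(x; q)_N` as a power series in `x`. -/
noncomputable def pochSeries (q : ℂ) (N : ℕ) : ℂ⟦X⟧ := ∏ k ∈ range N, (1 - rescale (q ^ k) X)

lemma pochSeries_succ (q : ℂ) (N : ℕ) :
    pochSeries q (N + 1) = pochSeries q N * (1 - C (q ^ N) * X) := by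
  rw [pochSeries, prod_range_succ, rescale_X, pochSeries]

lemma pochSeries_succ' (q : ℂ) (N : ℕ) :
    pochSeries q (N + 1) = rescale q (pochSeries q N) * (1 - X) := by
  simp only [pochSeries, prod_range_succ', map_prod, map_sub, map_one, rescale_rescale, pow_succ,
    pow_zero, rescale_one, RingHom.id_apply]

lemma mk_qBinom_mul_pochSeries (hroot : ∀ k : ℕ, 0 < k → q ^ k ≠ 1) (L : ℕ) :
    (PowerSeries.mk fun k => qBinom q (L + k) L) * pochSeries q (L + 1) = 1 := by
  induction L with
  | zero =>
    have h : (PowerSeries.mk fun k => qBinom q ((0 : ℕ) + k) (0 : ℕ)) =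
        PowerSeries.mk (1 : ℕ → ℂ) := by
      ext k
      rw [coeff_mk, coeff_mk, Nat.cast_zero, qBinom_zero_right hroot (by omega), Pi.one_apply]
    rw [h, pochSeries_succ', pochSeries, prod_range_zero, map_one, one_mul,
      PowerSeries.mk_one_mul_one_sub_eq_one]
  | succ L ih =>
    have hstep : (PowerSeries.mk fun k => qBinom q ((L + 1 : ℕ) + k) (L + 1 : ℕ)) *
        (1 - C (q ^ (L + 1)) * X) = PowerSeries.mk fun k => qBinom q (L + k) L := by
      rw [mul_sub, mul_one, mul_left_comm]
      ext (_ | k)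
      · simp only [map_sub, coeff_C_mul, coeff_zero_mul_X, coeff_mk, mul_zero, sub_zero,
          Nat.cast_zero, add_zero, qBinom_self hroot (Nat.cast_nonneg _)]
      · rw [map_sub, coeff_C_mul, coeff_succ_mul_X, coeff_mk, coeff_mk, coeff_mk,
          qBinom_pascal hroot (by omega), zpow_natCast]
        push_cast
        rw [← add_assoc, add_sub_cancel_right, add_sub_cancel_right, add_right_comm,
          add_sub_cancel_left, add_assoc]
    rw [pochSeries_succ, mul_left_comm, hstep, mul_comm, ih]

/-- The generating function in `i` of `z ^ i² T(L - i, i; a, b; q)`, where `s = L - a` and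
`t = L + a`. -/
noncomputable def leftSeries (z q : ℂ) (b s t : ℤ) : ℂ⟦X⟧ :=
  PowerSeries.mk fun i => z ^ i ^ 2 * trinomCoeff z q i (i + b) (i - b) (s - i) (t - i)

/-- The generating function in `M` of `z ^ b² T(L, M; a + b, b; q)`, where `s = L - a` and
`t = L + a`. -/
noncomputable def rightSeries (z q : ℂ) (b s t : ℤ) : ℂ⟦X⟧ :=
  PowerSeries.mk fun M => z ^ b ^ 2 * trinomCoeff z q M (M + b) (M - b) (s - b) (t + b)

/-- The analogue of `leftSeries z q b` at the half-integer `b = c + 1 / 2`, with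
`P, Q = (i + 1 / 2) ± b`. -/
noncomputable def leftHalfSeries (z q : ℂ) (c s t : ℤ) : ℂ⟦X⟧ :=
  PowerSeries.mk fun i =>
    z ^ i ^ 2 * trinomCoeff z q (i + 1) (i + (c + 1)) (i - c) (s - i) (t - i)

/-- The analogue of `rightSeries z q b` at the half-integer `b = c + 1 / 2`, with
`P, Q = (M + 1 / 2) ± b` and with one term for each of the integers next to `b`. -/
noncomputable def rightHalfSeries (z q : ℂ) (c s t : ℤ) : ℂ⟦X⟧ :=
  PowerSeries.mk fun M =>
    z ^ (c + 1) ^ 2 * trinomCoeff z q M (M + (c + 1)) (M - c) (s - (c + 1)) (t + (c + 1)) +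
      z ^ c ^ 2 * trinomCoeff z q M (M + (c + 1)) (M - c) (s - c) (t + c)

lemma leftSeries_add_one_eq (hq : q ≠ 0) (hroot : ∀ k : ℕ, 0 < k → q ^ k ≠ 1) (hz : z ^ 2 = q)
    {c s : ℤ} (t : ℤ) (h : 0 ≤ c ∨ c = -1 ∧ 0 < s) :
    leftSeries z q (c + 1) s t = C (q ^ (c + 1)) * rescale q (leftSeries z q (c + 1) (s - 2) t) +
      C z * (X * rescale q (leftHalfSeries z q c (s - 1) (t - 1))) := by
  ext i
  have hP := trinomCoeff_sub_one_left hroot z (M := i) (P := i + (c + 1)) (s := s - i)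
    (i - (c + 1)) (t - i) (by omega)
  rw [zpow_add₀ hq, zpow_natCast, sub_right_comm s] at hP
  simp only [map_add, coeff_C_mul, coeff_rescale, leftSeries, coeff_mk]
  rcases i with _ | i
  · rw [trinomCoeff_eq_zero (by omega)] at hP
    rw [coeff_zero_X_mul]
    linear_combination -z ^ 0 ^ 2 * hP
  · have hpow : z ^ (i + 1) ^ 2 = z * q ^ i * z ^ i ^ 2 := by rw [← hz]; ring
    have hP' : ((i + 1 : ℕ) + (c + 1) - 1 : ℤ) = i + (c + 1) := by push_cast; ring
    have hQ : ((i + 1 : ℕ) - (c + 1) : ℤ) = i - c := by push_cast; ring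
    have hsub (r : ℤ) : r - 1 - i = r - (i + 1 : ℕ) := by push_cast; ring
    rw [hP', hQ] at hP
    rw [coeff_succ_X_mul, coeff_rescale, leftHalfSeries, coeff_mk, hQ, hsub, hsub]
    linear_combination (-z ^ (i + 1) ^ 2) * hP +
      trinomCoeff z q (i + 1) (i + (c + 1)) (i - c) (s - (i + 1 : ℕ)) (t - (i + 1 : ℕ)) * hpow

lemma leftHalfSeries_eq (hq : q ≠ 0) (hroot : ∀ k : ℕ, 0 < k → q ^ k ≠ 1) (hz : z ^ 2 = q)
    {c : ℤ} (s t : ℤ) (hc : 0 ≤ c) :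
    leftHalfSeries z q c s t = C (q ^ (c + 1)) * rescale q (leftHalfSeries z q c (s - 2) t) +
      leftSeries z q c s t + C z * rescale q (leftSeries z q c (s - 1) (t - 1)) := by
  ext i
  simp only [map_add, coeff_C_mul, coeff_rescale, leftSeries, leftHalfSeries, coeff_mk]
  have hP := trinomCoeff_sub_one_left hroot z (M := i + 1) (P := i + (c + 1))
    (s := s - i) (i - c) (t - i) (by omega)
  rw [show i + (c + 1) - 1 = i + c by ring, trinomCoeff_succ hq hroot hz, zpow_add₀ hq,
    zpow_natCast] at hP
  simp only [sub_right_comm _ (1 : ℤ), sub_right_comm _ (2 : ℤ)]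
  linear_combination -z ^ i ^ 2 * hP

lemma zpow_add_one_sq_mul_zpow_sub (hq : q ≠ 0) (hz : z ^ 2 = q) (m c : ℤ) :
    z ^ (c + 1) ^ 2 * q ^ (m - c) = z ^ c ^ 2 * z * q ^ m := by
  subst hz
  have hz0 : z ≠ 0 := fun h => hq (by rw [h, zero_pow two_ne_zero])
  rw [← zpow_natCast, ← zpow_mul, ← zpow_mul, ← zpow_add_one₀ hz0, ← zpow_add₀ hz0,
    ← zpow_add₀ hz0]
  congr 1
  push_cast
  ring

lemma rightSeries_add_one_eq (hq : q ≠ 0) (hroot : ∀ k : ℕ, 0 < k → q ^ k ≠ 1) (hz : z ^ 2 = q)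
    {c s t : ℤ} (h : 0 ≤ c ∧ 0 ≤ t ∨ c < 0 ∧ 0 < s) :
    (1 - X) * rightSeries z q (c + 1) s t =
      C (q ^ (c + 1)) * rescale q (rightSeries z q (c + 1) (s - 2) t) +
        C z * (X * rescale q (rightHalfSeries z q c (s - 1) (t - 1))) := by
  ext M
  have hP := trinomCoeff_sub_one_left hroot z (M := M) (P := M + (c + 1)) (s := s - (c + 1))
    (M - (c + 1)) (t + (c + 1)) (by omega)
  rw [zpow_add₀ hq, zpow_natCast, sub_right_comm s] at hP
  rw [sub_mul, one_mul]
  simp only [map_add, map_sub, coeff_C_mul, coeff_rescale, rightSeries, coeff_mk]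
  rcases M with _ | m
  · rw [trinomCoeff_eq_zero (by omega)] at hP
    rw [coeff_zero_X_mul, coeff_zero_X_mul]
    linear_combination -z ^ (c + 1) ^ 2 * hP
  · have hpow := zpow_add_one_sq_mul_zpow_sub hq hz m c
    have hP' : ((m + 1 : ℕ) + (c + 1) - 1 : ℤ) = m + (c + 1) := by push_cast; ring
    have hQ' : ((m + 1 : ℕ) - (c + 1) : ℤ) = m - c := by push_cast; ring
    have hQ := trinomCoeff_sub_one_right hroot z (M := m) (Q := m - c) (t := t + (c + 1))
      (m + (c + 1)) (s - (c + 1)) (by omega)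
    rw [hP', hQ', trinomCoeff_succ hq hroot hz] at hP
    have hs : s - 1 - c = s - (c + 1) := by ring
    have ht : t - 1 + c = t + (c + 1) - 2 := by ring
    rw [sub_sub] at hQ
    rw [zpow_natCast] at hpow
    rw [coeff_succ_X_mul, coeff_succ_X_mul, coeff_rescale, rightHalfSeries, coeff_mk, coeff_mk, hQ',
      hs, ht, sub_right_comm s 1, sub_add_eq_add_sub t]
    linear_combination -z ^ (c + 1) ^ 2 * hP +
      trinomCoeff z q m (m + (c + 1)) (m - c) (s - (c + 1)) (t + (c + 1) - 2) * hpow -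
      z ^ (c + 1) ^ 2 * hQ

lemma rightSeries_neg (z q : ℂ) (b s t : ℤ) : rightSeries z q (-b) t s = rightSeries z q b s t := by
  ext M
  rw [rightSeries, rightSeries, coeff_mk, coeff_mk, trinomCoeff_swap, neg_sq, sub_neg_eq_add,
    sub_neg_eq_add, ← sub_eq_add_neg, ← sub_eq_add_neg]

lemma rightHalfSeries_neg (z q : ℂ) (c s t : ℤ) :
    rightHalfSeries z q (-c - 1) t s = rightHalfSeries z q c s t := by
  ext M
  rw [rightHalfSeries, rightHalfSeries, coeff_mk, coeff_mk, trinomCoeff_swap,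
    trinomCoeff_swap z q M (M + (-c - 1 + 1)), add_comm]
  ring_nf

lemma leftSeries_zero_swap (z q : ℂ) (s t : ℤ) : leftSeries z q 0 t s = leftSeries z q 0 s t := by
  ext i
  rw [leftSeries, leftSeries, coeff_mk, coeff_mk, trinomCoeff_swap, add_zero, sub_zero]

lemma leftHalfSeries_neg (z q : ℂ) (c s t : ℤ) :
    leftHalfSeries z q (-c - 1) t s = leftHalfSeries z q c s t := by
  ext i
  rw [leftHalfSeries, leftHalfSeries, coeff_mk, coeff_mk, trinomCoeff_swap]
  ring_nf

lemma rightHalfSeries_eq_add (hq : q ≠ 0) (hroot : ∀ k : ℕ, 0 < k → q ^ k ≠ 1) (hz : z ^ 2 = q)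
    {c : ℤ} (s t : ℤ) (hc : 0 ≤ c) :
    rightHalfSeries z q c s t = C (q ^ (c + 1)) * rescale q (rightHalfSeries z q c (s - 2) t) +
      rightSeries z q c s t + C (z * q ^ c) * rightSeries z q c (s - 1) (t + 1) := by
  ext M
  have hP (s' t' : ℤ) := trinomCoeff_sub_one_left hroot z (M := M) (P := M + (c + 1)) (s := s')
    (M - c) t' (by omega)
  have hP' : (M + (c + 1) - 1 : ℤ) = M + c := by ring
  have hs (a : ℤ) : s - a - 2 = s - 2 - a := sub_right_comm s a 2
  have hpow := zpow_add_one_sq_mul_zpow_sub hq hz c c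
  rw [sub_self, zpow_zero, mul_one] at hpow
  simp only [hP', zpow_add₀ hq (M : ℤ), zpow_natCast] at hP
  have hP₁ := hP (s - (c + 1)) (t + (c + 1))
  have hP₂ := hP (s - c) (t + c)
  rw [hs] at hP₁ hP₂
  simp only [map_add, coeff_C_mul, coeff_rescale, rightSeries, rightHalfSeries, coeff_mk]
  rw [sub_sub s 1, add_assoc t 1, add_comm 1 c]
  linear_combination -z ^ (c + 1) ^ 2 * hP₁ - z ^ c ^ 2 * hP₂ +
    trinomCoeff z q M (M + c) (M - c) (s - (c + 1)) (t + (c + 1)) * hpow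

lemma rightHalfSeries_eq (hq : q ≠ 0) (hroot : ∀ k : ℕ, 0 < k → q ^ k ≠ 1) (hz : z ^ 2 = q)
    {c t : ℤ} (s : ℤ) (hc : 0 ≤ c) (ht : 0 ≤ t) :
    (1 - X) * rightHalfSeries z q c s t =
      C (q ^ (c + 1)) * rescale q (rightHalfSeries z q c (s - 2) t) +
        (1 - X) * rightSeries z q c s t + C z * rescale q (rightSeries z q c (s - 1) (t - 1)) := by
  -- Exchanging `s` and `t` turns the recurrence for `rightSeries` at `b = -c` into one at `b = c`.
  have hmirror := rightSeries_add_one_eq hq hroot hz (c := -c - 1) (s := t + 1) (t := s - 1)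
    (.inr (by omega))
  rw [sub_add_cancel, rightSeries_neg, rightHalfSeries_neg, add_sub_cancel_right,
    show t + 1 - 2 = t - 1 by ring, rightSeries_neg, show s - 1 - 1 = s - 2 by ring] at hmirror
  have hC : C (z * q ^ c) * C (q ^ (-c)) = C z := by
    rw [← map_mul, mul_assoc, ← zpow_add₀ hq, add_neg_cancel, zpow_zero, mul_one]
  have hC' : C (z * q ^ c) * C z = C (q ^ (c + 1)) := by
    rw [← map_mul, mul_right_comm, ← sq, hz, ← zpow_one_add₀ hq, add_comm]
  rw [rightHalfSeries_eq_add hq hroot hz s t hc]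
  linear_combination C (z * q ^ c) * hmirror + rescale q (rightSeries z q c (s - 1) (t - 1)) * hC +
    X * rescale q (rightHalfSeries z q c (s - 2) t) * hC'

/-- `f c s t = (x; q)_N * g c s t` whenever `L = (s + t) / 2` equals `N - 1` and `s ≤ t`; this is
what relates `leftSeries` to `rightSeries` and `leftHalfSeries` to `rightHalfSeries`. -/
def EqPochSeriesMul (q : ℂ) (N : ℕ) (f g : ℤ → ℤ → ℤ → ℂ⟦X⟧) : Prop :=
  ∀ ⦃c s t : ℤ⦄, 0 ≤ c → s ≤ t → s + t + 2 = 2 * N → f c s t = pochSeries q N * g c s t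

lemma leftSeries_eqPochSeriesMul_zero (z q : ℂ) :
    EqPochSeriesMul q 0 (leftSeries z q) (rightSeries z q) := by
  intro c s t _ hst hN
  ext i
  rw [pochSeries, prod_range_zero, one_mul, leftSeries, rightSeries, coeff_mk, coeff_mk,
    trinomCoeff_eq_zero (by omega), trinomCoeff_eq_zero (by omega), mul_zero, mul_zero]

lemma leftHalfSeries_eqPochSeriesMul_zero (z q : ℂ) :
    EqPochSeriesMul q 0 (leftHalfSeries z q) (rightHalfSeries z q) := by
  intro c s t _ hst hN
  ext i
  rw [pochSeries, prod_range_zero, one_mul, leftHalfSeries, rightHalfSeries, coeff_mk, coeff_mk,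
    trinomCoeff_eq_zero (by omega), trinomCoeff_eq_zero (by omega), trinomCoeff_eq_zero (by omega),
    mul_zero, mul_zero, mul_zero, add_zero]

lemma leftSeries_eq_pochSeries_succ_mul (hq : q ≠ 0) (hroot : ∀ k : ℕ, 0 < k → q ^ k ≠ 1)
    (hz : z ^ 2 = q) {N : ℕ} {c s t : ℤ} (h : 0 ≤ c ∧ 0 ≤ t ∨ c = -1 ∧ 0 < s)
    (hinteger : leftSeries z q (c + 1) (s - 2) t =
      pochSeries q N * rightSeries z q (c + 1) (s - 2) t)
    (hhalf : leftHalfSeries z q c (s - 1) (t - 1) =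
      pochSeries q N * rightHalfSeries z q c (s - 1) (t - 1)) :
    leftSeries z q (c + 1) s t = pochSeries q (N + 1) * rightSeries z q (c + 1) s t := by
  have hright := rightSeries_add_one_eq hq hroot hz (c := c) (s := s) (t := t) (by omega)
  rw [leftSeries_add_one_eq hq hroot hz t (by omega), hinteger, hhalf, pochSeries_succ', map_mul,
    map_mul]
  linear_combination -rescale q (pochSeries q N) * hright

lemma leftSeries_zero_zero_zero (hroot : ∀ k : ℕ, 0 < k → q ^ k ≠ 1) (z : ℂ) :
    leftSeries z q 0 0 0 = pochSeries q 1 * rightSeries z q 0 0 0 := by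
  have hleft : leftSeries z q 0 0 0 = 1 := by
    ext (_ | i)
    · simp [leftSeries, trinomCoeff_zero_zero hroot]
    · rw [leftSeries, coeff_mk, trinomCoeff_eq_zero (by omega), mul_zero, coeff_one,
        if_neg i.succ_ne_zero]
  have hright : rightSeries z q 0 0 0 = PowerSeries.mk 1 := by
    ext M
    simp [rightSeries, trinomCoeff_zero_zero hroot]
  rw [hleft, hright, pochSeries_succ', pochSeries, prod_range_zero, map_one, one_mul, mul_comm,
    PowerSeries.mk_one_mul_one_sub_eq_one]

lemma leftSeries_eqPochSeriesMul_succ (hq : q ≠ 0) (hroot : ∀ k : ℕ, 0 < k → q ^ k ≠ 1)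
    (hz : z ^ 2 = q) {N : ℕ}
    (hinteger : EqPochSeriesMul q N (leftSeries z q) (rightSeries z q))
    (hhalf : EqPochSeriesMul q N (leftHalfSeries z q) (rightHalfSeries z q)) :
    EqPochSeriesMul q (N + 1) (leftSeries z q) (rightSeries z q) := by
  intro b s t hb hst hN
  push_cast at hN
  have hzero (s t : ℤ) : rightSeries z q 0 t s = rightSeries z q 0 s t := rightSeries_neg z q 0 s t
  rcases hb.lt_or_eq with hb | rfl
  · rw [← sub_add_cancel b 1]
    exact leftSeries_eq_pochSeries_succ_mul hq hroot hz (.inl (by omega))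
      (hinteger (by omega) (by omega) (by omega)) (hhalf (by omega) (by omega) (by omega))
  obtain ht | ⟨rfl, rfl, rfl⟩ : 0 < t ∨ N = 0 ∧ s = 0 ∧ t = 0 := by omega
  · have hinteger' : leftSeries z q 0 (t - 2) s = pochSeries q N * rightSeries z q 0 (t - 2) s := by
      rcases le_total (t - 2) s with h | h
      · exact hinteger le_rfl h (by omega)
      · rw [leftSeries_zero_swap, hzero, hinteger le_rfl h (by omega)]
    have hhalf' : leftHalfSeries z q (-1) (t - 1) (s - 1) =
        pochSeries q N * rightHalfSeries z q (-1) (t - 1) (s - 1) := by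
      have h := hhalf (c := 0) (s := s - 1) (t := t - 1) le_rfl (by omega) (by omega)
      rwa [← leftHalfSeries_neg, ← rightHalfSeries_neg, neg_zero, zero_sub] at h
    rw [← leftSeries_zero_swap, ← hzero]
    have h := leftSeries_eq_pochSeries_succ_mul (N := N) (c := -1) (s := t) (t := s) hq hroot hz
      (.inr ⟨rfl, ht⟩)
    rw [neg_add_cancel] at h
    exact h hinteger' hhalf'
  · -- The recurrence in `s` fails at `b = s = 0`, where the constant term `1` has no predecessor.
    exact leftSeries_zero_zero_zero hroot z

lemma leftHalfSeries_eqPochSeriesMul_succ (hq : q ≠ 0) (hroot : ∀ k : ℕ, 0 < k → q ^ k ≠ 1)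
    (hz : z ^ 2 = q) {N : ℕ}
    (hinteger : EqPochSeriesMul q N (leftSeries z q) (rightSeries z q))
    (hhalf : EqPochSeriesMul q N (leftHalfSeries z q) (rightHalfSeries z q))
    (hsucc : EqPochSeriesMul q (N + 1) (leftSeries z q) (rightSeries z q)) :
    EqPochSeriesMul q (N + 1) (leftHalfSeries z q) (rightHalfSeries z q) := by
  intro c s t hc hst hN
  have hright := rightHalfSeries_eq hq hroot hz (c := c) (t := t) s hc (by omega)
  rw [leftHalfSeries_eq hq hroot hz s t hc, hhalf hc (by omega) (by omega), hsucc hc hst hN,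
    hinteger hc (by omega) (by omega), pochSeries_succ', map_mul, map_mul]
  linear_combination -rescale q (pochSeries q N) * hright

theorem leftSeries_and_leftHalfSeries_eqPochSeriesMul (hq : q ≠ 0)
    (hroot : ∀ k : ℕ, 0 < k → q ^ k ≠ 1) (hz : z ^ 2 = q) (N : ℕ) :
    EqPochSeriesMul q N (leftSeries z q) (rightSeries z q) ∧
      EqPochSeriesMul q N (leftHalfSeries z q) (rightHalfSeries z q) := by
  induction N with
  | zero => exact ⟨leftSeries_eqPochSeriesMul_zero z q, leftHalfSeries_eqPochSeriesMul_zero z q⟩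
  | succ N ih =>
    have hsucc := leftSeries_eqPochSeriesMul_succ hq hroot hz ih.1 ih.2
    exact ⟨hsucc, leftHalfSeries_eqPochSeriesMul_succ hq hroot hz ih.1 ih.2 hsucc⟩

lemma sum_mul_Twar_of_nonneg (hq : q ≠ 0) (hroot : ∀ k : ℕ, 0 < k → q ^ k ≠ 1) (hz : z ^ 2 = q)
    (L M : ℕ) {a b : ℤ} (ha : 0 ≤ a) (hb : 0 ≤ b) :
    ∑ i ∈ range (M + 1), z ^ i ^ 2 * qBinom q (L + M - i) L * Twar z q (L - i) i a b =
      z ^ b ^ 2 * Twar z q L M (a + b) b := by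
  have hprod : leftSeries z q b (L - a) (L + a) * (PowerSeries.mk fun k => qBinom q (L + k) L) =
      rightSeries z q b (L - a) (L + a) := by
    have hseries := (leftSeries_and_leftHalfSeries_eqPochSeriesMul hq hroot hz (L + 1)).1
    rw [hseries hb (by omega) (by push_cast; ring), mul_right_comm, mul_comm (pochSeries q _),
      mk_qBinom_mul_pochSeries hroot, one_mul]
  have hcoeff := congrArg (coeff M) hprod
  rw [coeff_mul, Nat.sum_antidiagonal_eq_sum_range_succ_mk, rightSeries, coeff_mk] at hcoeff
  rw [Twar_eq_trinomCoeff, ← sub_sub, ← add_assoc, ← hcoeff]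
  refine sum_congr rfl fun i hi => ?_
  have hiM : i ≤ M := Nat.lt_succ_iff.mp (mem_range.mp hi)
  rw [leftSeries, coeff_mk, coeff_mk, Twar_eq_trinomCoeff, Nat.cast_sub hiM, add_sub_assoc,
    sub_right_comm, sub_add_eq_add_sub, mul_right_comm]

end GeneratingFunction

section Transformation

variable {q z : ℂ}

theorem sum_mul_Twar (hq : q ≠ 0) (hroot : ∀ k : ℕ, 0 < k → q ^ k ≠ 1) (hz : z ^ 2 = q)
    (L M : ℕ) {a b : ℤ} (hab : 0 ≤ a * b) :
    ∑ i ∈ range (M + 1), z ^ i ^ 2 * qBinom q (L + M - i) L * Twar z q (L - i) i a b =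
      z ^ b ^ 2 * Twar z q L M (a + b) b := by
  rcases mul_nonneg_iff.mp hab with ⟨ha, hb⟩ | ⟨ha, hb⟩
  · exact sum_mul_Twar_of_nonneg hq hroot hz L M ha hb
  · have h := sum_mul_Twar_of_nonneg hq hroot hz L M (neg_nonneg.mpr ha) (neg_nonneg.mpr hb)
    simpa only [← neg_add, Twar_neg, neg_sq] using h

lemma summable_mul_Twar (f : ℤ → ℂ) (L : ℤ) (M : ℕ) {m n : ℕ} (h : ¬(m = 0 ∧ n = 0)) :
    Summable fun j : ℤ => f j * Twar z q L M (m * j) (n * j) := by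
  refine summable_of_hasFiniteSupport ((Set.finite_Icc (-(|L| + M)) (|L| + M)).subset ?_)
  intro j hj
  by_contra hj'
  rw [Set.mem_Icc, ← abs_le, not_le] at hj'
  refine hj (mul_eq_zero_of_right _ (Twar_eq_zero ?_))
  rw [abs_mul, abs_mul, Nat.abs_cast, Nat.abs_cast]
  have hL := le_abs_self L
  have hmn : 1 ≤ (m : ℤ) ∨ 1 ≤ (n : ℤ) := by omega
  refine hmn.imp (fun hm => ?_) fun hn => ?_
  · linarith [le_mul_of_one_le_left (abs_nonneg j) hm]
  · linarith [le_mul_of_one_le_left (abs_nonneg j) hn, abs_nonneg L]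

end Transformation

theorem statement_5 (q z : ℂ) (hq : q ≠ 0) (hroot : ∀ k : ℕ, 0 < k → q ^ k ≠ 1)
    (hz : z ^ 2 = q) (m n : ℕ) (α : ℤ → ℂ) (F : ℤ → ℤ → ℂ)
    (hF : ∀ L M : ℤ, F L M = ∑' j : ℤ, α j * Twar z q L M ((m : ℤ) * j) ((n : ℤ) * j))
    (L M : ℕ) :
    ∑ i ∈ Finset.range (M + 1),
        z ^ (i ^ 2) * qBinom q ((L : ℤ) + (M : ℤ) - (i : ℤ)) (L : ℤ) * F ((L : ℤ) - (i : ℤ)) (i : ℤ)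
    = ∑' j : ℤ, z ^ (((n : ℤ) * j) ^ 2) * α j *
        Twar z q (L : ℤ) (M : ℤ) (((m : ℤ) + (n : ℤ)) * j) ((n : ℤ) * j) := by
  have hterm (j : ℤ) := sum_mul_Twar hq hroot hz L M (a := m * j) (b := n * j)
    (by rw [mul_mul_mul_comm]; exact mul_nonneg (by positivity) (mul_self_nonneg j))
  simp only [← add_mul] at hterm
  by_cases hmn : m = 0 ∧ n = 0
  · obtain ⟨rfl, rfl⟩ := hmn
    have hzero := hterm 0
    simp only [hF, Nat.cast_zero, zero_mul, add_zero, tsum_mul_left, tsum_mul_right] at hzero ⊢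
    rw [mul_right_comm, ← hzero, sum_mul]
    exact sum_congr rfl fun _ _ => by ring
  calc
    _ = ∑ i ∈ range (M + 1), ∑' j, z ^ i ^ 2 * qBinom q (L + M - i) L * α j *
          Twar z q (L - i) i (m * j) (n * j) := by
      simp only [hF, ← tsum_mul_left, mul_assoc]
    _ = ∑' j, ∑ i ∈ range (M + 1), z ^ i ^ 2 * qBinom q (L + M - i) L * α j *
          Twar z q (L - i) i (m * j) (n * j) :=
      (Summable.tsum_finsetSum fun i _ => summable_mul_Twar _ _ i hmn).symm
    _ = _ := tsum_congr fun j => by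
      rw [mul_right_comm, ← hterm, sum_mul]
      exact sum_congr rfl fun _ _ => mul_right_comm _ _ _
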